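/- Let α be the unique real root of the polynomial 54675·a⁴ − 2442195·a³ + 2182800·a² − 115424·a − 96429 lying in the interval (0.78, 0.79). Then for every real number a with 0 ≤ a < α, there exists x ∈ [0,π] such that 2a·sin(x) + a·sin(2x) + (4/3)·sin(3x) + sin(4x) + (6/5)·sin(5x) < 0. -/

import Mathlib

open Real

/-!
For `x ∈ (0, π)` and `c = cos x`, dividing the sum by `2 (1 + cos x) sin x > 0` gives `a - h c` for
a rational function `h`, so the sum is negative at `x` exactly when `a < h c`. The sharp constant
is therefore the maximum of `h` on `(-1, 1)`. A critical value `h c₀` is a value of `a` for which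
the numerator of `a - h c` has a double root, and eliminating `c₀` gives the quartic equation for
`α`. As `h` has a critical point near `0.42` with value in `(0.78, 0.79)`, where the quartic has
only one root, that value is `α`.
-/

/-- The sum `Φ₁(5)`, with a free real `a` in place of the sharp constant `α` of the coefficients
`2α, α, 4/3, 1, 6/5`. -/
noncomputable def fifthPartialSum (a x : ℝ) : ℝ :=
  2 * a * sin x + a * sin (2 * x) + (4 / 3) * sin (3 * x) + sin (4 * x) + (6 / 5) * sin (5 * x)

/-- The function `h`: the value of `a` for which `fifthPartialSum a` vanishes at `arccos c`, where
`-1 < c < 1`. -/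
noncomputable def threshold (c : ℝ) : ℝ :=
  (1 + 30 * c + 68 * c ^ 2 - 60 * c ^ 3 - 144 * c ^ 4) / (15 * (1 + c))

/-- The polynomial `-15 (1 + c)² h'(c)`, whose roots are the critical points of `threshold`. -/
def criticalPoly (c : ℝ) : ℝ :=
  432 * c ^ 4 + 696 * c ^ 3 + 112 * c ^ 2 - 136 * c - 29

/-- The quartic whose root in `(0.78, 0.79)` is the sharp constant `α`. -/
def sharpQuartic (a : ℝ) : ℝ :=
  54675 * a ^ 4 - 2442195 * a ^ 3 + 2182800 * a ^ 2 - 115424 * a - 96429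

theorem sin_four_mul (x : ℝ) : sin (4 * x) = sin x * (8 * cos x ^ 3 - 4 * cos x) := by
  rw [show 4 * x = 2 * (2 * x) by ring, sin_two_mul, sin_two_mul, cos_two_mul]
  ring

theorem sin_five_mul (x : ℝ) :
    sin (5 * x) = sin x * (16 * cos x ^ 4 - 12 * cos x ^ 2 + 1) := by
  rw [show 5 * x = 4 * x + x by ring, sin_add, sin_four_mul,
    show 4 * x = 2 * (2 * x) by ring, cos_two_mul, cos_two_mul]
  ring

theorem fifthPartialSum_eq (a : ℝ) {x : ℝ} (hx : 1 + cos x ≠ 0) :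
    fifthPartialSum a x = 2 * (1 + cos x) * sin x * (a - threshold (cos x)) := by
  have sin_three : sin (3 * x) = sin x * (4 * cos x ^ 2 - 1) := by
    rw [sin_three_mul]
    linear_combination -4 * sin x * sin_sq_add_cos_sq x
  rw [fifthPartialSum, threshold, sin_two_mul, sin_three, sin_four_mul, sin_five_mul]
  field_simp
  ring

theorem fifthPartialSum_neg_iff (a : ℝ) {x : ℝ} (hx : x ∈ Set.Ioo 0 π) :
    fifthPartialSum a x < 0 ↔ a < threshold (cos x) := by
  have sin_x_pos : 0 < sin x := sin_pos_of_mem_Ioo hx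
  have one_add_cos_pos : 0 < 1 + cos x := by
    have := cos_lt_cos_of_nonneg_of_le_pi hx.1.le le_rfl hx.2
    rw [cos_pi] at this
    linarith
  have factor_pos : 0 < 2 * (1 + cos x) * sin x := by positivity
  rw [fifthPartialSum_eq a one_add_cos_pos.ne', ← smul_eq_mul,
    smul_neg_iff_of_pos_left factor_pos, sub_neg]

-- `sharpQuartic` is a multiple of `∏ (a - h cᵢ)` over the critical points `cᵢ` of `h`, and
-- `h c - h cᵢ` vanishes to second order at `cᵢ`; hence the square.
theorem sharpQuartic_threshold {c : ℝ} (hc : 1 + c ≠ 0) :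
    sharpQuartic (threshold c) = criticalPoly c ^ 2 *
      (559872 * c ^ 8 - 870912 * c ^ 7 + 588384 * c ^ 6 + 1679616 * c ^ 5 - 982089 * c ^ 4
        - 1047696 * c ^ 3 + 323328 * c ^ 2 + 210957 * c - 25455) / (225 * (1 + c) ^ 4) := by
  rw [sharpQuartic, threshold, criticalPoly]
  field_simp
  ring

theorem exists_criticalPoly_eq_zero :
    ∃ c ∈ Set.Ioo (0.42 : ℝ) 0.43, criticalPoly c = 0 := by
  have continuous_criticalPoly : Continuous criticalPoly := by
    unfold criticalPoly
    fun_prop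
  have zero_mem : (0 : ℝ) ∈ Set.Ioo (criticalPoly 0.42) (criticalPoly 0.43) := by
    norm_num [criticalPoly]
  exact intermediate_value_Ioo (by norm_num) continuous_criticalPoly.continuousOn zero_mem

theorem threshold_mem_Ioo {c : ℝ} (hc : c ∈ Set.Ioo (0.42 : ℝ) 0.43) :
    threshold c ∈ Set.Ioo (0.78 : ℝ) 0.79 := by
  obtain ⟨hc₁, hc₂⟩ := hc
  have one_add_pos : 0 < 15 * (1 + c) := by linarith
  rw [threshold, Set.mem_Ioo, lt_div_iff₀ one_add_pos, div_lt_iff₀ one_add_pos]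
  constructor <;> nlinarith [mul_pos (sub_pos.2 hc₁) (sub_pos.2 hc₂), sq_nonneg (c ^ 2)]

theorem strictAntiOn_sharpQuartic : StrictAntiOn sharpQuartic (Set.Ioo 0.78 0.79) := by
  rintro a ⟨ha₁, ha₂⟩ b ⟨hb₁, hb₂⟩ hab
  have slope_neg : 54675 * ((a + b) * (a ^ 2 + b ^ 2)) - 2442195 * (a ^ 2 + a * b + b ^ 2)
      + 2182800 * (a + b) - 115424 < 0 := by
    have : (a + b) * (a ^ 2 + b ^ 2) < 2 * 2 := by gcongr <;> nlinarith
    nlinarith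
  have := mul_neg_of_pos_of_neg (sub_pos.2 hab) slope_neg
  rw [sharpQuartic, sharpQuartic]
  linarith

theorem exists_threshold_eq {α : ℝ} (hα : α ∈ Set.Ioo (0.78 : ℝ) 0.79)
    (hroot : sharpQuartic α = 0) : ∃ c ∈ Set.Ioo (-1) 1, threshold c = α := by
  obtain ⟨c, hc, hcrit⟩ := exists_criticalPoly_eq_zero
  have hc' : c ∈ Set.Ioo (-1) 1 := ⟨by linarith [hc.1], by linarith [hc.2]⟩
  have threshold_root : sharpQuartic (threshold c) = 0 := by
    rw [sharpQuartic_threshold (by linarith [hc'.1]), hcrit]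
    simp
  exact ⟨c, hc', strictAntiOn_sharpQuartic.injOn (threshold_mem_Ioo hc) hα
    (threshold_root.trans hroot.symm)⟩

theorem theorem1_sharpness_general {α : ℝ} (hα : α ∈ Set.Ioo (0.78 : ℝ) 0.79)
    (hroot : sharpQuartic α = 0) :
    ∃ x ∈ Set.Ioo 0 π, ∀ a, fifthPartialSum a x < 0 ↔ a < α := by
  obtain ⟨c, ⟨hc₁, hc₂⟩, rfl⟩ := exists_threshold_eq hα hroot
  have arccos_mem : arccos c ∈ Set.Ioo 0 π := ⟨arccos_pos.2 hc₂, arccos_lt_pi.2 hc₁⟩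
  refine ⟨arccos c, arccos_mem, fun a ↦ ?_⟩
  rw [fifthPartialSum_neg_iff a arccos_mem, cos_arccos hc₁.le hc₂.le]

theorem theorem1_sharpness
    (α : ℝ) (hα : α ∈ Set.Ioo (0.78 : ℝ) 0.79)
    (hroot : 54675 * α ^ 4 - 2442195 * α ^ 3 + 2182800 * α ^ 2
      - 115424 * α - 96429 = 0)
    (a : ℝ) (ha0 : 0 ≤ a) (ha : a < α) :
    ∃ x ∈ Set.Icc 0 Real.pi,
      2 * a * Real.sin x + a * Real.sin (2 * x) + (4 / 3) * Real.sin (3 * x)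
        + Real.sin (4 * x) + (6 / 5) * Real.sin (5 * x) < 0 := by
  obtain ⟨x, hx, sum_neg_iff⟩ := theorem1_sharpness_general hα hroot
  exact ⟨x, Set.Ioo_subset_Icc_self hx, (sum_neg_iff a).2 ha⟩
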